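/- Three-term theta function identity: for all s, t, u, v ∈ ℂ, [s+t][s−t][u+v][u−v] = [u+s][u−s][v+t][v−t] − [u+t][u−t][v+s][v−s]. -/

import Mathlib

noncomputable section

open Complex Finset

namespace Ell

/-- `x^s = exp(-iπ s /(r τ))`. -/
def xp (τ : ℂ) (r : ℝ) (s : ℂ) : ℂ :=
  Complex.exp (-Complex.I * (Real.pi : ℂ) * s / ((r : ℂ) * τ))

/-- `Θ_p(z) = ∏_{j ≥ 0} (1 - z p^j)(1 - p^{j+1}/z)(1 - p^{j+1})`. -/
def Theta (p z : ℂ) : ℂ :=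
  ∏' j : ℕ, ((1 - z * p ^ j) * (1 - p ^ (j + 1) / z) * (1 - p ^ (j + 1)))

/-- The bracket `[u] = x^{u²/r - u} Θ_p(x^{2u})` with `p = x^{2r}`. -/
def br (τ : ℂ) (r : ℝ) (u : ℂ) : ℂ :=
  xp τ r (u ^ 2 / (r : ℂ) - u) * Theta (xp τ r (2 * (r : ℂ))) (xp τ r (2 * u))

/-- Elliptic shifted factorial `[u]_n = ∏_{j=0}^{n-1} [u+j]`. -/
def brF (τ : ℂ) (r : ℝ) (u : ℂ) (n : ℕ) : ℂ :=
  ∏ j ∈ Finset.range n, br τ r (u + (j : ℂ))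

/-- Elliptic binomial coefficient `C_n^k(α,β,γ)`. -/
def Cnk (τ : ℂ) (r : ℝ) (k n : ℕ) (α β γ : ℂ) : ℂ :=
  brF τ r 1 k / (brF τ r 1 n * brF τ r 1 (k - n)) *
    (brF τ r (α - γ) n * brF τ r (α + γ + (k : ℂ) - (n : ℂ)) n *
      brF τ r (α - β) (k - n) * brF τ r (α + β + (n : ℂ)) (k - n)) /
    (brF τ r (β - γ + (n : ℂ) - (k : ℂ)) n * brF τ r (γ - β - (n : ℂ)) (k - n) *
      brF τ r (β + γ) k)

/-- The elliptic 6j-symbol `R_n^m(α,β,γ,δ;k)`. -/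
def Rnm (τ : ℂ) (r : ℝ) (k n m : ℕ) (α β γ δ : ℂ) : ℂ :=
  ∑ j ∈ Finset.range (min n m + 1),
    Cnk τ r n j α γ (β + (k : ℂ) - (n : ℂ)) * Cnk τ r (k - j) (m - j) β (γ + (j : ℂ)) δ

/-- Terminating very-well-poised elliptic hypergeometric sum with explicit
truncation `N`:  `Σ_{j=0}^N ([u₀+2j]/[u₀]) ([u₀]_j/[1]_j) ∏ᵢ [uᵢ]_j/[u₀+1-uᵢ]_j`. -/
def Vsum (τ : ℂ) (r : ℝ) (u₀ : ℂ) (us : List ℂ) (N : ℕ) : ℂ :=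
  ∑ j ∈ Finset.range (N + 1),
    br τ r (u₀ + 2 * (j : ℂ)) / br τ r u₀ * (brF τ r u₀ j / brF τ r 1 j) *
      (us.map fun ui => brF τ r ui j / brF τ r (u₀ + 1 - ui) j).prod

/-- "Every bracket appearing in a denominator of `C_n^k(·,β,γ)` is nonzero". -/
def CdenomNZ (τ : ℂ) (r : ℝ) (k n : ℕ) (β γ : ℂ) : Prop :=
  brF τ r 1 n ≠ 0 ∧ brF τ r 1 (k - n) ≠ 0 ∧
    brF τ r (β - γ + (n : ℂ) - (k : ℂ)) n ≠ 0 ∧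
    brF τ r (γ - β - (n : ℂ)) (k - n) ≠ 0 ∧ brF τ r (β + γ) k ≠ 0

/-- "Every bracket appearing in a denominator of `R_n^m(α,β,γ,δ;k)` is nonzero". -/
def RdenomNZ (τ : ℂ) (r : ℝ) (k n m : ℕ) (β γ δ : ℂ) : Prop :=
  ∀ j ≤ min n m,
    CdenomNZ τ r n j γ (β + (k : ℂ) - (n : ℂ)) ∧
      CdenomNZ τ r (k - j) (m - j) (γ + (j : ℂ)) δ

/-- Jacobi theta `ϑ₁(v|σ)`. -/
def th1 (v σ : ℂ) : ℂ :=
  2 * Complex.exp (2 * (Real.pi : ℂ) * Complex.I * σ / 8) *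
    (∏' n : ℕ, (1 - Complex.exp (2 * (Real.pi : ℂ) * Complex.I * σ) ^ (n + 1))) *
    Complex.sin ((Real.pi : ℂ) * v) *
    ∏' n : ℕ,
      (1 - 2 * Complex.exp (2 * (Real.pi : ℂ) * Complex.I * σ) ^ (n + 1) *
            Complex.cos (2 * (Real.pi : ℂ) * v) +
        Complex.exp (2 * (Real.pi : ℂ) * Complex.I * σ) ^ (2 * (n + 1)))

/-- Jacobi theta `ϑ₀(v|σ)`. -/
def th0 (v σ : ℂ) : ℂ :=
  -Complex.I * Complex.exp ((Real.pi : ℂ) * Complex.I * (v + σ / 4)) * th1 (v + σ / 2) σ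

/-- Jacobi theta `ϑ₂(v|σ)`. -/
def th2 (v σ : ℂ) : ℂ := th1 (v + 1 / 2) σ

/-- Jacobi theta `ϑ₃(v|σ)`. -/
def th3 (v σ : ℂ) : ℂ :=
  Complex.exp ((Real.pi : ℂ) * Complex.I * (v + σ / 4)) * th1 (v + (σ + 1) / 2) σ

/-- Intertwining vector component `ψ_ε(u)^a_b`, `ε ∈ {1, -1}`. -/
def psi (τ : ℂ) (r : ℝ) (u : ℂ) (ε : ℤ) (a b : ℤ) : ℂ :=
  if ε = 1 then th0 ((((a : ℂ) - (b : ℂ)) * u + (a : ℂ)) / (2 * (r : ℂ))) (τ / 2)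
  else th3 ((((a : ℂ) - (b : ℂ)) * u + (a : ℂ)) / (2 * (r : ℂ))) (τ / 2)

/-- The constant `C = x^{-r/4} e^{-iπ/4} τ^{1/2}`. -/
def Cc (τ : ℂ) (r : ℝ) : ℂ :=
  xp τ r (-(r : ℂ) / 4) * Complex.exp (-(Real.pi : ℂ) * Complex.I / 4) * τ ^ (1 / 2 : ℂ)

/-- Dual intertwining vector component `ψ*_ε(u)^a_b = -ε(a-b) C² ψ_{-ε}(u-1)^a_b/(2[b][u])`. -/
def psiStar (τ : ℂ) (r : ℝ) (u : ℂ) (ε : ℤ) (a b : ℤ) : ℂ :=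
  -(ε : ℂ) * ((a : ℂ) - (b : ℂ)) * Cc τ r ^ 2 * psi τ r (u - 1) (-ε) a b /
    (2 * br τ r (b : ℂ) * br τ r u)

/-- Sign attached to a boolean. -/
def sg (b : Bool) : ℤ := if b then 1 else -1

/-- Canonical path from `a`: up for `j ≤ n`, down afterwards. -/
def cpathZ (a n : ℤ) (j : ℕ) : ℤ := if (j : ℤ) ≤ n then a + j else a + 2 * n - j

/-- Admissibility: `a - b ∈ {-k, -k+2, …, k}`. -/
def adm (k : ℕ) (a b : ℤ) : Prop := (a - b).natAbs ≤ k ∧ (a - b - (k : ℤ)) % 2 = 0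

instance (k : ℕ) (a b : ℤ) : Decidable (adm k a b) := by unfold adm; infer_instance

/-- Fused intertwining vector component `ψ^{(k)}_μ(u)^a_b` (zero if `a,b` not admissible). -/
def psiF (τ : ℂ) (r : ℝ) (k : ℕ) (μ : ℤ) (u : ℂ) (a b : ℤ) : ℂ :=
  if adm k a b then
    ∑ ε ∈ Finset.univ.filter fun ε : Fin k → Bool => (∑ j, sg (ε j)) = μ,
      ∏ j : Fin k,
        psi τ r (u + (k : ℂ) - (((j : ℕ) + 1 : ℕ) : ℂ)) (sg (ε j))
          (cpathZ a (((k : ℤ) - (a - b)) / 2) (j : ℕ))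
          (cpathZ a (((k : ℤ) - (a - b)) / 2) ((j : ℕ) + 1))
  else 0

/-- Partial-sum path attached to a sign sequence `δ`, starting at `a`. -/
def spath (k : ℕ) (a : ℤ) (δ : Fin k → Bool) (j : ℕ) : ℤ :=
  a + ∑ i ∈ Finset.range j, if h : i < k then sg (δ ⟨i, h⟩) else 0

/-- Fused dual intertwining vector component `ψ*^{(k)}_μ(u)^b_a`
(sum over all admissible paths from `a` to `b`; zero if not admissible). -/
def psiStarF (τ : ℂ) (r : ℝ) (k : ℕ) (μ : ℤ) (u : ℂ) (b a : ℤ) : ℂ :=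
  if adm k a b then
    ∑ δ ∈ Finset.univ.filter fun δ : Fin k → Bool => (∑ j, sg (δ j)) = b - a,
      ∏ j : Fin k,
        psiStar τ r (u + (k : ℂ) - (((j : ℕ) + 1 : ℕ) : ℂ))
          (if ((j : ℕ) + 1 : ℤ) ≤ ((k : ℤ) + μ) / 2 then 1 else -1)
          (spath k a δ ((j : ℕ) + 1)) (spath k a δ (j : ℕ))
  else 0

/-- The `L`-matrix `L^{(k)}(a,b;c,d|u) = Σ_μ ψ*^{(k)}_μ(u)^d_c ψ^{(k)}_μ(u)^a_b`. -/
def Lk (τ : ℂ) (r : ℝ) (k : ℕ) (u : ℂ) (a b c d : ℤ) : ℂ :=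
  ∑ i ∈ Finset.range (k + 1),
    psiStarF τ r k ((k : ℤ) - 2 * (i : ℤ)) u d c * psiF τ r k ((k : ℤ) - 2 * (i : ℤ)) u a b

/-- Normalized face weight `W̄(a,b;d,c|u)` (arguments ordered (NW, NE; SW, SE)). -/
def Wb (τ : ℂ) (r : ℝ) (u : ℂ) (a b d c : ℤ) : ℂ :=
  if b = a + 1 ∧ d = a + 1 ∧ c = a + 2 then 1
  else if b = a - 1 ∧ d = a - 1 ∧ c = a - 2 then 1
  else if b = a + 1 ∧ d = a + 1 ∧ c = a then
    br τ r ((a : ℂ) - u) * br τ r 1 / (br τ r (a : ℂ) * br τ r (1 + u))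
  else if b = a - 1 ∧ d = a - 1 ∧ c = a then
    br τ r ((a : ℂ) + u) * br τ r 1 / (br τ r (a : ℂ) * br τ r (1 + u))
  else if b = a + 1 ∧ d = a - 1 ∧ c = a then
    br τ r ((a : ℂ) + 1) * br τ r u / (br τ r (a : ℂ) * br τ r (1 + u))
  else if b = a - 1 ∧ d = a + 1 ∧ c = a then
    br τ r ((a : ℂ) - 1) * br τ r u / (br τ r (a : ℂ) * br τ r (1 + u))
  else 0

/-- Sequence with prescribed endpoints `d`, `c` and free interior values `f`. -/
def seqI (k : ℕ) (d c : ℤ) (f : Fin (k - 1) → ℤ) (j : ℕ) : ℤ :=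
  if h0 : j = 0 then d
  else if hj : j < k then f ⟨j - 1, by omega⟩ else c

/-- Fused face weight `W^{(k,1)}(a,b;d,c|u)`. -/
def Wk1 (τ : ℂ) (r : ℝ) (k : ℕ) (u : ℂ) (a b d c : ℤ) : ℂ :=
  if adm k a b then
    ∑' f : Fin (k - 1) → ℤ,
      ∏ j ∈ Finset.range k,
        Wb τ r (u + (k : ℂ) - ((j : ℂ) + 1))
          (cpathZ a (((k : ℤ) - (a - b)) / 2) j)
          (cpathZ a (((k : ℤ) - (a - b)) / 2) (j + 1))
          (seqI k d c f j) (seqI k d c f (j + 1))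
  else 0

/-- Fused face weight `W^{(k,l)}(a,b;d,c|u)`. -/
def Wkl (τ : ℂ) (r : ℝ) (k l : ℕ) (u : ℂ) (a b d c : ℤ) : ℂ :=
  if adm l b c then
    ∑' g : Fin (l - 1) → ℤ,
      ∏ i ∈ Finset.range l,
        Wk1 τ r k (u - (l : ℂ) + ((i : ℂ) + 1))
          (seqI l a d g i) (cpathZ b (((l : ℤ) - (b - c)) / 2) i)
          (seqI l a d g (i + 1)) (cpathZ b (((l : ℤ) - (b - c)) / 2) (i + 1))
  else 0

/-- Eight-vertex weight `ā(u)`. -/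
def aw (τ : ℂ) (r : ℝ) (u : ℂ) : ℂ :=
  th2 (1 / (2 * (r : ℂ))) (τ / 2) * th2 (u / (2 * (r : ℂ))) (τ / 2) /
    (th2 0 (τ / 2) * th2 ((1 + u) / (2 * (r : ℂ))) (τ / 2))

/-- Eight-vertex weight `b̄(u)`. -/
def bw (τ : ℂ) (r : ℝ) (u : ℂ) : ℂ :=
  th2 (1 / (2 * (r : ℂ))) (τ / 2) * th1 (u / (2 * (r : ℂ))) (τ / 2) /
    (th2 0 (τ / 2) * th1 ((1 + u) / (2 * (r : ℂ))) (τ / 2))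

/-- Eight-vertex weight `c̄(u)`. -/
def cw (τ : ℂ) (r : ℝ) (u : ℂ) : ℂ :=
  th1 (1 / (2 * (r : ℂ))) (τ / 2) * th2 (u / (2 * (r : ℂ))) (τ / 2) /
    (th2 0 (τ / 2) * th1 ((1 + u) / (2 * (r : ℂ))) (τ / 2))

/-- Eight-vertex weight `d̄(u)`. -/
def dw (τ : ℂ) (r : ℝ) (u : ℂ) : ℂ :=
  -(th1 (1 / (2 * (r : ℂ))) (τ / 2) * th1 (u / (2 * (r : ℂ))) (τ / 2)) /
    (th2 0 (τ / 2) * th2 ((1 + u) / (2 * (r : ℂ))) (τ / 2))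

/-- The normalized eight-vertex `R`-matrix entry `R̄(u)_{(ε₁,ε₂),(ε₁',ε₂')}`. -/
def Rbar (τ : ℂ) (r : ℝ) (u : ℂ) (e1 e2 e1' e2' : ℤ) : ℂ :=
  if e1' = e1 ∧ e2' = e2 ∧ e1 = e2 then aw τ r u
  else if e1' = e1 ∧ e2' = e2 ∧ e1 = -e2 then bw τ r u
  else if e1' = e2 ∧ e2' = e1 ∧ e1 = -e2 then cw τ r u
  else if e1' = -e1 ∧ e2' = -e2 ∧ e1 = e2 then dw τ r u
  else 0

/-- Sklyanin standard-basis vector `v_+(z)`. -/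
def vp (τ z : ℂ) : ℂ := th3 (2 * z) (2 * τ) - th2 (2 * z) (2 * τ)

/-- Sklyanin standard-basis vector `v_-(z)`. -/
def vm (τ z : ℂ) : ℂ := th3 (2 * z) (2 * τ) + th2 (2 * z) (2 * τ)

/-!
The identity is a Plücker relation: if `[u + v][u - v] = A u * B v - B u * A v` for all `u, v`, then
both sides of the three-term identity expand to the same polynomial in the values of `A` and `B`.

To find `A` and `B`, write `Θ_p` as a theta series by the Jacobi triple product, so that `[u]` is,
up to a constant, `∑ₙ (-1)ⁿ exp(πiσ(n + u/r - 1/2)²)` with `σ = -1/τ`. In the product of two such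
series substitute `(m, n) = (i + j, i - j)` when `m + n` is even and `(i + j + 1, i - j)` when it
is odd: since `(i + j)² + (i - j)² = 2i² + 2j²`, each half of the double series factors.

The triple product is the limit `n → ∞` of the finite identity
`∏_{j<n} (1 - z pʲ)(1 - pʲ⁺¹/z) = ∑ₖ (-1)ᵏ p^{k(k-1)/2} [2n choose n+k]_p zᵏ`.
-/

section FiniteTripleProduct

variable {K : Type*} [Field K] {p : K}

/-- The `q`-Pochhammer symbol `(p; p)_n = ∏_{1 ≤ j ≤ n} (1 - p^j)`, the `q`-analogue of `n!` from
which Gaussian binomial coefficients are built. -/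
def qPochhammer (p : K) (n : ℕ) : K := ∏ j ∈ range n, (1 - p ^ (j + 1))

/-- The reciprocal `1 / (p; p)_m`, extended by `0` to negative `m` (like `1 / Γ`), so that its
recurrence holds for every integer `m`. -/
def invQPochhammer (p : K) : ℤ → K
  | .ofNat n => (qPochhammer p n)⁻¹
  | .negSucc _ => 0

/-- The central Gaussian binomial coefficient `[2n choose n+k]_p` of the finite triple product,
which vanishes for `|k| > n`. -/
def centralQBinom (p : K) (n : ℕ) (k : ℤ) : K :=
  qPochhammer p (2 * n) * invQPochhammer p (n + k) * invQPochhammer p (n - k)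

/-- The coefficient `(-1)^k p^{k(k-1)/2}` of `z^k` in the theta series of `Θ_p(z)`. -/
def thetaCoeff (p : K) (k : ℤ) : K := (-1) ^ k * p ^ (k * (k - 1) / 2)

lemma qPochhammer_succ (p : K) (n : ℕ) :
    qPochhammer p (n + 1) = qPochhammer p n * (1 - p ^ (n + 1)) :=
  prod_range_succ _ _

lemma one_sub_pow_succ_ne_zero (hp : ¬IsOfFinOrder p) (n : ℕ) : 1 - p ^ (n + 1) ≠ 0 :=
  fun h ↦ hp (isOfFinOrder_iff_pow_eq_one.mpr ⟨n + 1, n.succ_pos, (sub_eq_zero.mp h).symm⟩)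

lemma qPochhammer_ne_zero (hp : ¬IsOfFinOrder p) (n : ℕ) : qPochhammer p n ≠ 0 :=
  prod_ne_zero_iff.mpr fun j _ ↦ one_sub_pow_succ_ne_zero hp j

lemma invQPochhammer_natCast (p : K) (n : ℕ) : invQPochhammer p n = (qPochhammer p n)⁻¹ := rfl

lemma invQPochhammer_of_neg (p : K) {m : ℤ} (hm : m < 0) : invQPochhammer p m = 0 := by
  obtain ⟨n, rfl⟩ := Int.eq_negSucc_of_lt_zero hm
  rfl

lemma invQPochhammer_sub_one (hp : ¬IsOfFinOrder p) (m : ℤ) :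
    invQPochhammer p (m - 1) = (1 - p ^ m) * invQPochhammer p m := by
  rcases lt_trichotomy m 0 with hneg | rfl | hpos
  · simp [invQPochhammer_of_neg p hneg, invQPochhammer_of_neg p (hneg.trans' (sub_one_lt m))]
  · simp [invQPochhammer_of_neg p neg_one_lt_zero]
  · obtain ⟨n, rfl⟩ : ∃ n : ℕ, m = (n + 1 : ℕ) := ⟨(m - 1).toNat, by omega⟩
    have hfactor := one_sub_pow_succ_ne_zero hp n
    have hprod := qPochhammer_ne_zero hp n
    rw [zpow_natCast, invQPochhammer_natCast, Nat.cast_succ, add_sub_cancel_right,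
      invQPochhammer_natCast, qPochhammer_succ]
    field_simp

lemma centralQBinom_zero (p : K) (k : ℤ) : centralQBinom p 0 k = if k = 0 then 1 else 0 := by
  rcases lt_trichotomy k 0 with hneg | rfl | hpos
  · simp [centralQBinom, invQPochhammer_of_neg p hneg, hneg.ne]
  · simp [centralQBinom, invQPochhammer, qPochhammer]
  · simp [centralQBinom, invQPochhammer_of_neg p (neg_neg_of_pos hpos), hpos.ne']

lemma centralQBinom_succ (hp₀ : p ≠ 0) (hp : ¬IsOfFinOrder p) (n : ℕ) (k : ℤ) :
    centralQBinom p (n + 1) k =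
      (1 + p ^ (2 * n + 1)) * centralQBinom p n k
        + p ^ n * p ^ (1 - k) * centralQBinom p n (k - 1)
        + p ^ (n + 1) * p ^ k * centralQBinom p n (k + 1) := by
  have htop : qPochhammer p (2 * (n + 1)) =
      qPochhammer p (2 * n) * (1 - p ^ (2 * n + 1)) * (1 - p ^ (2 * n + 2)) := by
    rw [Nat.mul_succ, qPochhammer_succ, qPochhammer_succ]
  have hplus₁ : invQPochhammer p (n + k) =
      (1 - p ^ (n + 1 + k : ℤ)) * invQPochhammer p (n + 1 + k) := by
    rw [← invQPochhammer_sub_one hp]; ring_nf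
  have hplus₀ : invQPochhammer p (n + (k - 1)) =
      (1 - p ^ (n + k : ℤ)) * invQPochhammer p (n + k) := by
    rw [← invQPochhammer_sub_one hp]; ring_nf
  have hminus₁ : invQPochhammer p (n - k) =
      (1 - p ^ (n + 1 - k : ℤ)) * invQPochhammer p (n + 1 - k) := by
    rw [← invQPochhammer_sub_one hp]; ring_nf
  have hminus₀ : invQPochhammer p (n - (k + 1)) =
      (1 - p ^ (n - k : ℤ)) * invQPochhammer p (n - k) := by
    rw [← invQPochhammer_sub_one hp]; ring_nf
  simp only [centralQBinom]
  rw [htop, hplus₀, hplus₁, hminus₀, hminus₁, Nat.cast_succ,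
    show (n : ℤ) - (k - 1) = n + 1 - k by ring, show (n : ℤ) + (k + 1) = n + 1 + k by ring]
  simp only [zpow_add₀ hp₀, zpow_sub₀ hp₀, zpow_one, zpow_natCast]
  have hpk : p ^ k ≠ 0 := zpow_ne_zero k hp₀
  field_simp
  ring

lemma thetaCoeff_add_one (hp₀ : p ≠ 0) (k : ℤ) :
    thetaCoeff p (k + 1) = -(p ^ k * thetaCoeff p k) := by
  have hexp : (k + 1) * (k + 1 - 1) / 2 = k * (k - 1) / 2 + k := by
    rw [← Int.add_mul_ediv_right _ _ two_ne_zero]; ring_nf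
  rw [thetaCoeff, thetaCoeff, hexp, zpow_add₀ hp₀, zpow_add_one₀ (by simp)]
  ring

lemma thetaCoeff_sub_one (hp₀ : p ≠ 0) (k : ℤ) :
    thetaCoeff p (k - 1) = -(p ^ (1 - k) * thetaCoeff p k) := by
  have hstep := thetaCoeff_add_one hp₀ (k - 1)
  rw [sub_add_cancel] at hstep
  rw [hstep, mul_neg, neg_neg, ← mul_assoc, ← zpow_add₀ hp₀]
  simp

variable [TopologicalSpace K] [IsTopologicalRing K]

theorem hasSum_finite_triple_product (hp₀ : p ≠ 0) (hp : ¬IsOfFinOrder p) {z : K} (hz : z ≠ 0)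
    (n : ℕ) :
    HasSum (fun k : ℤ ↦ centralQBinom p n k * (thetaCoeff p k * z ^ k))
      (∏ j ∈ range n, ((1 - z * p ^ j) * (1 - p ^ (j + 1) / z))) := by
  induction n with
  | zero =>
    have hsingle := hasSum_single (f := fun k ↦ centralQBinom p 0 k * (thetaCoeff p k * z ^ k)) 0
      fun k hk ↦ by simp [centralQBinom_zero, hk]
    simpa [centralQBinom_zero, thetaCoeff] using hsingle
  | succ n ih =>
    have hdown := (Equiv.subRight (1 : ℤ)).hasSum_iff.mpr ih
    have hup := (Equiv.addRight (1 : ℤ)).hasSum_iff.mpr ih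
    have hexpand (P : K) : P * ((1 - z * p ^ n) * (1 - p ^ (n + 1) / z)) =
        (1 + p ^ (2 * n + 1)) * P - p ^ n * z * P - p ^ (n + 1) * z⁻¹ * P := by
      field_simp
      ring
    rw [prod_range_succ, hexpand]
    refine (((ih.mul_left _).sub (hdown.mul_left _)).sub (hup.mul_left _)).congr_fun fun k ↦ ?_
    simp only [Function.comp_apply, Equiv.subRight_apply, Equiv.coe_addRight]
    rw [centralQBinom_succ hp₀ hp, thetaCoeff_add_one hp₀, thetaCoeff_sub_one hp₀,
      zpow_sub_one₀ hz, zpow_add_one₀ hz]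
    field_simp
    ring

end FiniteTripleProduct

open Filter
open scoped Real Topology

section TripleProduct

variable {p z : ℂ}

lemma not_isOfFinOrder_of_norm_lt_one (hp : ‖p‖ < 1) : ¬IsOfFinOrder p :=
  fun h ↦ hp.ne h.norm_eq_one

lemma tprod_one_sub_pow_succ_ne_zero (hp : ‖p‖ < 1) : ∏' n : ℕ, (1 - p ^ (n + 1)) ≠ 0 := by
  have hsummable : Summable fun n : ℕ ↦ ‖-p ^ (n + 1)‖ := by
    simpa using (summable_nat_add_iff 1).mpr (summable_geometric_of_lt_one (norm_nonneg p) hp)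
  simpa [← sub_eq_add_neg] using tprod_one_add_ne_zero_of_summable (f := fun n : ℕ ↦ -p ^ (n + 1))
    (fun n ↦ by simpa [← sub_eq_add_neg] using
      one_sub_pow_succ_ne_zero (not_isOfFinOrder_of_norm_lt_one hp) n) hsummable

lemma tendsto_qPochhammer (hp : ‖p‖ < 1) :
    Tendsto (qPochhammer p) atTop (𝓝 (∏' n : ℕ, (1 - p ^ (n + 1)))) :=
  (ModularForm.multipliable_one_sub_pow hp).tendsto_prod_tprod_nat

lemma tendsto_inv_qPochhammer (hp : ‖p‖ < 1) :
    Tendsto (fun n ↦ (qPochhammer p n)⁻¹) atTop (𝓝 (∏' n : ℕ, (1 - p ^ (n + 1)))⁻¹) :=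
  (tendsto_qPochhammer hp).inv₀ (tprod_one_sub_pow_succ_ne_zero hp)

lemma tendsto_invQPochhammer (hp : ‖p‖ < 1) :
    Tendsto (invQPochhammer p) atTop (𝓝 (∏' n : ℕ, (1 - p ^ (n + 1)))⁻¹) := by
  rw [← Nat.map_cast_int_atTop, tendsto_map'_iff]
  exact tendsto_inv_qPochhammer hp

lemma exists_norm_invQPochhammer_le (hp : ‖p‖ < 1) : ∃ M, ∀ m, ‖invQPochhammer p m‖ ≤ M := by
  obtain ⟨M, hM⟩ :=
    (Metric.isBounded_range_of_tendsto _ (tendsto_inv_qPochhammer hp)).exists_norm_le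
  refine ⟨M, fun m ↦ ?_⟩
  cases m with
  | ofNat n => exact hM _ ⟨n, rfl⟩
  | negSucc n => simpa [invQPochhammer] using (norm_nonneg _).trans (hM _ ⟨0, rfl⟩)

lemma exists_norm_centralQBinom_le (hp : ‖p‖ < 1) : ∃ M, ∀ n k, ‖centralQBinom p n k‖ ≤ M := by
  obtain ⟨M, hM⟩ := (Metric.isBounded_range_of_tendsto _ (tendsto_qPochhammer hp)).exists_norm_le
  obtain ⟨N, hN⟩ := exists_norm_invQPochhammer_le hp
  have hM₀ : 0 ≤ M := (norm_nonneg _).trans (hM _ ⟨0, rfl⟩)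
  have hN₀ : 0 ≤ N := (norm_nonneg _).trans (hN 0)
  refine ⟨M * N * N, fun n k ↦ ?_⟩
  rw [centralQBinom, norm_mul, norm_mul]
  gcongr
  exacts [hM _ ⟨2 * n, rfl⟩, hN _, hN _]

lemma tendsto_centralQBinom (hp : ‖p‖ < 1) (k : ℤ) :
    Tendsto (fun n ↦ centralQBinom p n k) atTop (𝓝 (∏' n : ℕ, (1 - p ^ (n + 1)))⁻¹) := by
  have hdouble : Tendsto (fun n : ℕ ↦ 2 * n) atTop atTop := tendsto_id.const_mul_atTop' two_pos
  have hplus : Tendsto (fun n : ℕ ↦ (n : ℤ) + k) atTop atTop :=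
    tendsto_atTop_add_const_right _ _ tendsto_natCast_atTop_atTop
  have hminus : Tendsto (fun n : ℕ ↦ (n : ℤ) - k) atTop atTop :=
    tendsto_atTop_add_const_right _ (-k) tendsto_natCast_atTop_atTop
  have hlim := (((tendsto_qPochhammer hp).comp hdouble).mul
    ((tendsto_invQPochhammer hp).comp hplus)).mul ((tendsto_invQPochhammer hp).comp hminus)
  rwa [mul_inv_cancel₀ (tprod_one_sub_pow_succ_ne_zero hp), one_mul] at hlim

lemma thetaCoeff_exp_mul_exp_zpow (σ w : ℂ) (k : ℤ) :
    thetaCoeff (exp (2 * π * I * σ)) k * exp (2 * π * I * w) ^ k =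
      jacobiTheta₂_term k (w + (1 - σ) / 2) σ := by
  have hexp : ((k * (k - 1) / 2 : ℤ) : ℂ) = k * (k - 1) / 2 := by
    rw [Int.cast_div (even_iff_two_dvd.mp (Int.even_mul_pred_self k)) two_ne_zero]
    push_cast
    rfl
  rw [thetaCoeff, jacobiTheta₂_term, ← exp_pi_mul_I, ← exp_int_mul, ← exp_int_mul, ← exp_int_mul,
    ← exp_add, ← exp_add, hexp]
  congr 1
  ring

lemma summable_thetaCoeff_mul_zpow (hp₀ : p ≠ 0) (hp : ‖p‖ < 1) (hz : z ≠ 0) :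
    Summable fun k : ℤ ↦ thetaCoeff p k * z ^ k := by
  obtain ⟨σ, rfl⟩ : ∃ σ, exp (2 * π * I * σ) = p :=
    ⟨log p / (2 * π * I), by rw [mul_div_cancel₀ _ two_pi_I_ne_zero, exp_log hp₀]⟩
  obtain ⟨w, rfl⟩ : ∃ w, exp (2 * π * I * w) = z :=
    ⟨log z / (2 * π * I), by rw [mul_div_cancel₀ _ two_pi_I_ne_zero, exp_log hz]⟩
  have hσ : 0 < σ.im := by
    simpa [norm_exp, Real.pi_pos] using hp
  simpa only [thetaCoeff_exp_mul_exp_zpow] using (summable_jacobiTheta₂_term_iff _ _).mpr hσ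

lemma multipliable_Theta (hp : ‖p‖ < 1) (z : ℂ) :
    Multipliable fun j : ℕ ↦ (1 - z * p ^ j) * (1 - p ^ (j + 1) / z) * (1 - p ^ (j + 1)) := by
  have hgeom : Summable fun j : ℕ ↦ ‖p‖ ^ j := summable_geometric_of_lt_one (norm_nonneg _) hp
  have hleft : Multipliable fun j : ℕ ↦ 1 - z * p ^ j := by
    simpa [← sub_eq_add_neg] using multipliable_one_add_of_summable
      (f := fun j : ℕ ↦ -(z * p ^ j)) (by simpa using hgeom.mul_left ‖z‖)
  have hright : Multipliable fun j : ℕ ↦ 1 - p ^ (j + 1) / z := by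
    simpa [← sub_eq_add_neg] using multipliable_one_add_of_summable
      (f := fun j : ℕ ↦ -(p ^ (j + 1) / z))
      (by simpa using ((summable_nat_add_iff 1).mpr hgeom).div_const ‖z‖)
  exact (hleft.mul hright).mul (ModularForm.multipliable_one_sub_pow hp)

theorem jacobi_triple_product (hp₀ : p ≠ 0) (hp : ‖p‖ < 1) (hz : z ≠ 0) :
    Theta p z = ∑' k : ℤ, thetaCoeff p k * z ^ k := by
  set q := ∏' n : ℕ, (1 - p ^ (n + 1))
  obtain ⟨M, hM⟩ := exists_norm_centralQBinom_le hp
  have hseries : Tendsto (fun n ↦ ∑' k : ℤ, centralQBinom p n k * (thetaCoeff p k * z ^ k)) atTop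
      (𝓝 (∑' k : ℤ, q⁻¹ * (thetaCoeff p k * z ^ k))) := by
    refine tendsto_tsum_of_dominated_convergence
      ((summable_thetaCoeff_mul_zpow hp₀ hp hz).norm.mul_left M)
      (fun k ↦ (tendsto_centralQBinom hp k).mul_const _) (.of_forall fun n k ↦ ?_)
    rw [norm_mul]
    gcongr
    exact hM n k
  have hprod := (multipliable_Theta hp z).tendsto_prod_tprod_nat
  have hsplit (n : ℕ) :
      ∏ j ∈ range n, ((1 - z * p ^ j) * (1 - p ^ (j + 1) / z) * (1 - p ^ (j + 1))) =
        (∑' k : ℤ, centralQBinom p n k * (thetaCoeff p k * z ^ k)) * qPochhammer p n := by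
    rw [prod_mul_distrib, qPochhammer, (hasSum_finite_triple_product hp₀
      (not_isOfFinOrder_of_norm_lt_one hp) hz n).tsum_eq]
  simp only [hsplit] at hprod
  have hlim := tendsto_nhds_unique hprod (hseries.mul (tendsto_qPochhammer hp))
  rwa [tsum_mul_left, mul_right_comm, inv_mul_cancel₀ (tprod_one_sub_pow_succ_ne_zero hp),
    one_mul] at hlim

theorem Theta_exp_eq_jacobiTheta₂ {σ : ℂ} (hσ : 0 < σ.im) (w : ℂ) :
    Theta (exp (2 * π * I * σ)) (exp (2 * π * I * w)) = jacobiTheta₂ (w + (1 - σ) / 2) σ := by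
  have hp : ‖exp (2 * π * I * σ)‖ < 1 := UpperHalfPlane.norm_exp_two_pi_I_lt_one ⟨σ, hσ⟩
  rw [jacobi_triple_product (exp_ne_zero _) hp (exp_ne_zero _)]
  simp only [thetaCoeff_exp_mul_exp_zpow, jacobiTheta₂]

end TripleProduct

section AdditionFormula

lemma isCompl_range_add_sub_range_add_one_sub :
    IsCompl (Set.range fun x : ℤ × ℤ ↦ (x.1 + x.2, x.1 - x.2))
      (Set.range fun x : ℤ × ℤ ↦ (x.1 + x.2 + 1, x.1 - x.2)) := by
  rw [isCompl_iff, Set.disjoint_iff_forall_ne, codisjoint_iff]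
  constructor
  · rintro _ ⟨⟨i, j⟩, rfl⟩ _ ⟨⟨i', j'⟩, rfl⟩ h
    simp only [Prod.mk.injEq] at h
    omega
  · refine Set.eq_univ_iff_forall.mpr fun ⟨m, n⟩ ↦ ?_
    rcases Int.even_or_odd' (m + n) with ⟨c, h | h⟩
    · exact .inl ⟨(c, m - c), by simp only [Prod.mk.injEq]; omega⟩
    · exact .inr ⟨(c, m - c - 1), by simp only [Prod.mk.injEq]; omega⟩

lemma hasSum_int_prod_of_add_sub {M : Type*} [AddCommMonoid M] [TopologicalSpace M]
    [ContinuousAdd M] {f : ℤ × ℤ → M} {a b : M}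
    (heven : HasSum (fun x : ℤ × ℤ ↦ f (x.1 + x.2, x.1 - x.2)) a)
    (hodd : HasSum (fun x : ℤ × ℤ ↦ f (x.1 + x.2 + 1, x.1 - x.2)) b) : HasSum f (a + b) := by
  have heven_inj : Function.Injective fun x : ℤ × ℤ ↦ (x.1 + x.2, x.1 - x.2) := by
    rintro ⟨i, j⟩ ⟨i', j'⟩ h
    simp only [Prod.mk.injEq] at h ⊢
    omega
  have hodd_inj : Function.Injective fun x : ℤ × ℤ ↦ (x.1 + x.2 + 1, x.1 - x.2) := by
    rintro ⟨i, j⟩ ⟨i', j'⟩ h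
    simp only [Prod.mk.injEq] at h ⊢
    omega
  exact HasSum.add_isCompl isCompl_range_add_sub_range_add_one_sub
    (heven_inj.hasSum_range_iff.mpr heven) (hodd_inj.hasSum_range_iff.mpr hodd)

lemma jacobiTheta₂_term_mul_of_even (a b σ : ℂ) (i j : ℤ) :
    jacobiTheta₂_term (i + j) (a + b) σ * jacobiTheta₂_term (i - j) (a - b) σ =
      jacobiTheta₂_term i (2 * a) (2 * σ) * jacobiTheta₂_term j (2 * b) (2 * σ) := by
  simp only [jacobiTheta₂_term, ← exp_add]
  congr 1
  push_cast
  ring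

lemma jacobiTheta₂_term_mul_of_odd (a b σ : ℂ) (i j : ℤ) :
    jacobiTheta₂_term (i + j + 1) (a + b) σ * jacobiTheta₂_term (i - j) (a - b) σ =
      exp (π * I * (σ + 2 * a + 2 * b)) *
        (jacobiTheta₂_term i (2 * a + σ) (2 * σ) * jacobiTheta₂_term j (2 * b + σ) (2 * σ)) := by
  simp only [jacobiTheta₂_term, ← exp_add]
  congr 1
  push_cast
  ring

lemma hasSum_jacobiTheta₂_term_mul {σ : ℂ} (hσ : 0 < σ.im) (x y : ℂ) :
    HasSum (fun k : ℤ × ℤ ↦ jacobiTheta₂_term k.1 x σ * jacobiTheta₂_term k.2 y σ)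
      (jacobiTheta₂ x σ * jacobiTheta₂ y σ) := by
  have hx := ((summable_jacobiTheta₂_term_iff x σ).mpr hσ).norm
  have hy := ((summable_jacobiTheta₂_term_iff y σ).mpr hσ).norm
  rw [jacobiTheta₂, jacobiTheta₂, tsum_mul_tsum_of_summable_norm hx hy]
  exact (summable_mul_of_summable_norm hx hy).hasSum

theorem jacobiTheta₂_add_mul_jacobiTheta₂_sub {σ : ℂ} (hσ : 0 < σ.im) (a b : ℂ) :
    jacobiTheta₂ (a + b) σ * jacobiTheta₂ (a - b) σ =
      jacobiTheta₂ (2 * a) (2 * σ) * jacobiTheta₂ (2 * b) (2 * σ) +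
        exp (π * I * (σ + 2 * a + 2 * b)) *
          (jacobiTheta₂ (2 * a + σ) (2 * σ) * jacobiTheta₂ (2 * b + σ) (2 * σ)) := by
  have h2σ : 0 < (2 * σ).im := by simpa using hσ
  refine (hasSum_jacobiTheta₂_term_mul hσ (a + b) (a - b)).unique (hasSum_int_prod_of_add_sub ?_ ?_)
  · simpa only [jacobiTheta₂_term_mul_of_even] using
      hasSum_jacobiTheta₂_term_mul h2σ (2 * a) (2 * b)
  · simpa only [jacobiTheta₂_term_mul_of_odd] using
      (hasSum_jacobiTheta₂_term_mul h2σ (2 * a + σ) (2 * b + σ)).mul_left _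

/-- The theta series `∑ₙ exp(πi(σ(n + y)² + 2nb))`, i.e. the theta function with characteristics
`y`, `b` without the usual phase `exp(2πiyb)`. Both `[u]` and the two factors into which products
`[u + v][u - v]` split are of this form. -/
def gaussTheta (σ y b : ℂ) : ℂ := exp (π * I * σ * y ^ 2) * jacobiTheta₂ (σ * y + b) σ

lemma gaussTheta_add_one_right (σ y b : ℂ) : gaussTheta σ y (b + 1) = gaussTheta σ y b := by
  rw [gaussTheta, gaussTheta, ← add_assoc, jacobiTheta₂_add_left]

lemma gaussTheta_add_one_zero (σ y : ℂ) : gaussTheta σ (y + 1) 0 = gaussTheta σ y 0 := by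
  rw [gaussTheta, gaussTheta, add_zero, add_zero, mul_add_one, jacobiTheta₂_add_left', ← mul_assoc,
    ← exp_add]
  congr 2
  ring

lemma gaussTheta_add_mul_gaussTheta_sub {σ : ℂ} (hσ : 0 < σ.im) (x y b c : ℂ) :
    gaussTheta σ (x + y) (b + c) * gaussTheta σ (x - y) (b - c) =
      gaussTheta (2 * σ) x (2 * b) * gaussTheta (2 * σ) y (2 * c) +
        exp (2 * π * I * (b + c)) *
          (gaussTheta (2 * σ) (x + 1 / 2) (2 * b) * gaussTheta (2 * σ) (y + 1 / 2) (2 * c)) := by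
  have haddition := jacobiTheta₂_add_mul_jacobiTheta₂_sub hσ (σ * x + b) (σ * y + c)
  have hgauss : exp (π * I * σ * (x + y) ^ 2) * exp (π * I * σ * (x - y) ^ 2) =
      exp (π * I * (2 * σ) * x ^ 2) * exp (π * I * (2 * σ) * y ^ 2) := by
    simp only [← exp_add]
    ring_nf
  have hgauss_half : exp (π * I * (2 * σ) * x ^ 2) * exp (π * I * (2 * σ) * y ^ 2) *
        exp (π * I * (σ + 2 * (σ * x + b) + 2 * (σ * y + c))) =
      exp (2 * π * I * (b + c)) * exp (π * I * (2 * σ) * (x + 1 / 2) ^ 2) *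
        exp (π * I * (2 * σ) * (y + 1 / 2) ^ 2) := by
    simp only [← exp_add]
    ring_nf
  simp only [gaussTheta]
  rw [show σ * (x + y) + (b + c) = σ * x + b + (σ * y + c) by ring,
    show σ * (x - y) + (b - c) = σ * x + b - (σ * y + c) by ring,
    show 2 * σ * x + 2 * b = 2 * (σ * x + b) by ring,
    show 2 * σ * y + 2 * c = 2 * (σ * y + c) by ring,
    show 2 * σ * (x + 1 / 2) + 2 * b = 2 * (σ * x + b) + σ by ring,
    show 2 * σ * (y + 1 / 2) + 2 * c = 2 * (σ * y + c) + σ by ring,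
    mul_mul_mul_comm, hgauss, haddition]
  linear_combination jacobiTheta₂ (2 * (σ * x + b) + σ) (2 * σ) *
    jacobiTheta₂ (2 * (σ * y + c) + σ) (2 * σ) * hgauss_half

lemma gaussTheta_half_add_mul_gaussTheta_half_sub {σ : ℂ} (hσ : 0 < σ.im) (x y : ℂ) :
    gaussTheta σ (x + y) (1 / 2) * gaussTheta σ (x - y) (1 / 2) =
      gaussTheta (2 * σ) x 0 * gaussTheta (2 * σ) y 0 -
        gaussTheta (2 * σ) (x + 1 / 2) 0 * gaussTheta (2 * σ) (y + 1 / 2) 0 := by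
  have hphase : exp (2 * π * I * (1 / 2 + 0)) = -1 := by
    rw [← exp_pi_mul_I]
    ring_nf
  have hdrop (x : ℂ) : gaussTheta (2 * σ) x (2 * (1 / 2)) = gaussTheta (2 * σ) x 0 := by
    rw [← gaussTheta_add_one_right (2 * σ) x 0]
    norm_num
  have hproduct := gaussTheta_add_mul_gaussTheta_sub hσ x y (1 / 2) 0
  rw [hphase, hdrop, hdrop, mul_zero, add_zero, sub_zero] at hproduct
  rw [hproduct, neg_one_mul, ← sub_eq_add_neg]

end AdditionFormula

section Bracket

variable {τ : ℂ} {r : ℝ}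

lemma im_neg_inv_pos (hτ : 0 < τ.im) : 0 < (-τ⁻¹).im := by
  rw [neg_inv]
  exact UpperHalfPlane.im_inv_neg_coe_pos ⟨τ, hτ⟩

lemma br_eq_gaussTheta (hτ : 0 < τ.im) (hr : r ≠ 0) (u : ℂ) :
    br τ r u = exp (π * I * τ⁻¹ / 4) * gaussTheta (-τ⁻¹) (u / r - 1 / 2) (1 / 2) := by
  have hτ₀ : τ ≠ 0 := by
    rintro rfl
    simp at hτ
  have hr₀ : (r : ℂ) ≠ 0 := ofReal_ne_zero.mpr hr
  have hnome : xp τ r (2 * r) = exp (2 * π * I * -τ⁻¹) := by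
    rw [xp]
    congr 1
    field_simp
  have harg : xp τ r (2 * u) = exp (2 * π * I * (-τ⁻¹ * (u / r))) := by
    rw [xp]
    congr 1
    field_simp
  have hgauss : xp τ r (u ^ 2 / r - u) =
      exp (π * I * τ⁻¹ / 4) * exp (π * I * -τ⁻¹ * (u / r - 1 / 2) ^ 2) := by
    rw [xp, ← exp_add]
    congr 1
    field_simp
    ring
  rw [br, hnome, harg, hgauss, Theta_exp_eq_jacobiTheta₂ (im_neg_inv_pos hτ), gaussTheta, mul_assoc]
  ring_nf

lemma br_add_mul_br_sub (hτ : 0 < τ.im) (hr : r ≠ 0) (u v : ℂ) :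
    br τ r (u + v) * br τ r (u - v) = exp (π * I * τ⁻¹ / 4) ^ 2 *
      (gaussTheta (2 * -τ⁻¹) (u / r + 1 / 2) 0 * gaussTheta (2 * -τ⁻¹) (v / r) 0 -
        gaussTheta (2 * -τ⁻¹) (u / r) 0 * gaussTheta (2 * -τ⁻¹) (v / r + 1 / 2) 0) := by
  have hproduct :=
    gaussTheta_half_add_mul_gaussTheta_half_sub (im_neg_inv_pos hτ) (u / r - 1 / 2) (v / r)
  have hperiod := gaussTheta_add_one_zero (2 * -τ⁻¹) (u / r - 1 / 2)
  rw [show u / r - 1 / 2 + 1 = u / r + 1 / 2 by ring] at hperiod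
  rw [← hperiod, sub_add_cancel] at hproduct
  rw [br_eq_gaussTheta hτ hr, br_eq_gaussTheta hτ hr, ← hproduct,
    show (u + v) / r - 1 / 2 = u / r - 1 / 2 + v / r by ring,
    show (u - v) / r - 1 / 2 = u / r - 1 / 2 - v / r by ring]
  ring

end Bracket

/-- Three-term theta function identity. -/
theorem three_term_identity (τ : ℂ) (r : ℝ) (hτ : 0 < τ.im) (hr : 0 < r) (s t u v : ℂ) :
    br τ r (s + t) * br τ r (s - t) * br τ r (u + v) * br τ r (u - v) =
      br τ r (u + s) * br τ r (u - s) * br τ r (v + t) * br τ r (v - t) -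
        br τ r (u + t) * br τ r (u - t) * br τ r (v + s) * br τ r (v - s) := by
  have hproduct := br_add_mul_br_sub hτ hr.ne'
  rw [mul_assoc, mul_assoc (br τ r (u + s) * _), mul_assoc (br τ r (u + t) * _)]
  simp only [hproduct]
  ring

end Ell
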